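/- Let G = (V,E) be a strongly connected directed graph and C an abstract simplicial complex on V. Then the family F_G^C of all subsets of V that are independent on (G,C) is itself an abstract simplicial complex: ∅ ∈ F_G^C, and every subset of an independent set is independent. -/

import Mathlib

/-!
It suffices to delete one vertex `w` from an independent set `W`. An edge of `G_W` avoiding `w`
is still an edge of `G_{W ∖ {w}}`, because shrinking `W` only enlarges the set of admissible
interior vertices (`redEdge_erase`). Two consecutive edges `(p, w)` and `(w, q)` of `G_W` with
`p ≠ q` concatenate to a single edge `(p, q)` of `G_{W ∖ {w}}`: the vertex `w` is itself
admissible there because `W ∈ C` (`redEdge_erase_through`). Hence every directed path of `G_W`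
between vertices other than `w` shortcuts to one of `G_{W ∖ {w}}`.
-/

/-- A constraint set `C` on the vertex set `V` is an abstract simplicial complex (ASC)
if `∅ ∈ C` and `C` is downward closed. -/
def isASC {V : Type*} (C : Finset V → Prop) : Prop :=
  C ∅ ∧ ∀ A B : Finset V, C A → B ⊆ A → C B

/-- `pathIn E T u v` : there is a directed path from `u` to `v` (in the graph with edge
relation `E`) all of whose vertices lie in the set `T`. -/
def pathIn {V : Type*} (E : V → V → Prop) (T : Set V) : V → V → Prop :=
  Relation.ReflTransGen (fun a b => E a b ∧ a ∈ T ∧ b ∈ T)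

/-- The edge relation of the reduced graph `G_W`: for distinct `v1, v2 ∈ W`, there is an
edge `(v1, v2)` iff there is a directed path in `G` from `v1` to `v2` all of whose
vertices lie in `{v1, v2} ∪ ((V ∖ W) ∩ V^C_{W ∖ {v1,v2}})`, where
`V^C_Z = {x : Z ∪ {x} ∈ C}`. -/
def redEdge {V : Type*} [DecidableEq V] (E : V → V → Prop) (C : Finset V → Prop)
    (W : Finset V) (v1 v2 : V) : Prop :=
  v1 ∈ W ∧ v2 ∈ W ∧ v1 ≠ v2 ∧
    pathIn E (({v1, v2} : Set V) ∪
      {x : V | x ∉ W ∧ C (insert x ((W.erase v1).erase v2))}) v1 v2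

/-- `W` is independent on `(G, C)` iff `W = ∅`, or `W ∈ C` and the reduced graph `G_W`
is strongly connected. -/
def independentOn {V : Type*} [DecidableEq V] (E : V → V → Prop) (C : Finset V → Prop)
    (W : Finset V) : Prop :=
  W = ∅ ∨ (C W ∧ ∀ u ∈ W, ∀ v ∈ W, Relation.ReflTransGen (redEdge E C W) u v)

theorem pathIn_mono {V : Type*} {E : V → V → Prop} {S T : Set V} (h : S ⊆ T) {u v : V}
    (p : pathIn E S u v) : pathIn E T u v :=
  Relation.ReflTransGen.mono (fun _ _ hab => ⟨hab.1, h hab.2.1, h hab.2.2⟩) _ _ p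

/-- An edge of the reduced graph survives the deletion of a vertex other than its endpoints. -/
theorem redEdge_erase {V : Type*} [DecidableEq V] {E : V → V → Prop} {C : Finset V → Prop}
    (hC : isASC C) {W : Finset V} {w p q : V} (hp : p ≠ w) (hq : q ≠ w)
    (h : redEdge E C W p q) : redEdge E C (W.erase w) p q := by
  obtain ⟨hpW, hqW, hpq, hpath⟩ := h
  refine ⟨Finset.mem_erase.2 ⟨hp, hpW⟩, Finset.mem_erase.2 ⟨hq, hqW⟩, hpq, pathIn_mono ?_ hpath⟩
  rintro x (hx | ⟨hxW, hxC⟩)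
  · exact Or.inl hx
  · refine Or.inr ⟨fun h => hxW (Finset.mem_of_mem_erase h), hC.2 _ _ hxC ?_⟩
    intro y
    simp only [Finset.mem_insert, Finset.mem_erase]
    tauto

/-- Consecutive edges `(p, w)`, `(w, q)` of the reduced graph merge into one edge `(p, q)` once
`w` is deleted. -/
theorem redEdge_erase_through {V : Type*} [DecidableEq V] {E : V → V → Prop}
    {C : Finset V → Prop} (hC : isASC C) {W : Finset V} (hW : C W) {w p q : V} (hpq : p ≠ q)
    (h₁ : redEdge E C W p w) (h₂ : redEdge E C W w q) : redEdge E C (W.erase w) p q := by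
  obtain ⟨hpW, hwW, hpw, hpath₁⟩ := h₁
  obtain ⟨-, hqW, hwq, hpath₂⟩ := h₂
  have hw : w ∉ W.erase w ∧ C (insert w (((W.erase w).erase p).erase q)) := by
    refine ⟨Finset.notMem_erase w W, hC.2 _ _ hW ?_⟩
    intro y
    simp only [Finset.mem_insert, Finset.mem_erase]
    rintro (rfl | h)
    · exact hwW
    · exact h.2.2.2
  refine ⟨Finset.mem_erase.2 ⟨hpw, hpW⟩, Finset.mem_erase.2 ⟨hwq.symm, hqW⟩, hpq,
    Relation.ReflTransGen.trans (pathIn_mono ?_ hpath₁) (pathIn_mono ?_ hpath₂)⟩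
  · rintro x ((rfl | rfl) | ⟨hxW, hxC⟩)
    · exact Or.inl (Or.inl rfl)
    · exact Or.inr hw
    · refine Or.inr ⟨fun h => hxW (Finset.mem_of_mem_erase h), hC.2 _ _ hxC ?_⟩
      intro y
      simp only [Finset.mem_insert, Finset.mem_erase]
      tauto
  · rintro x ((rfl | rfl) | ⟨hxW, hxC⟩)
    · exact Or.inr hw
    · exact Or.inl (Or.inr rfl)
    · refine Or.inr ⟨fun h => hxW (Finset.mem_of_mem_erase h), hC.2 _ _ hxC ?_⟩
      intro y
      simp only [Finset.mem_insert, Finset.mem_erase]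
      tauto

/-- Shortcutting a path of the reduced graph around `w`. The disjunction strengthens the claim
for induction along the path: when the path has just arrived at `w`, the predecessor of `w` is
remembered. -/
theorem reach_erase {V : Type*} [DecidableEq V] {E : V → V → Prop} {C : Finset V → Prop}
    (hC : isASC C) {W : Finset V} (hW : C W) {w u y : V} (hu : u ≠ w)
    (h : Relation.ReflTransGen (redEdge E C W) u y) :
    (y ≠ w ∧ Relation.ReflTransGen (redEdge E C (W.erase w)) u y) ∨
    (y = w ∧ ∃ p, p ≠ w ∧ Relation.ReflTransGen (redEdge E C (W.erase w)) u p ∧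
      redEdge E C W p w) := by
  induction h with
  | refl => exact Or.inl ⟨hu, .refl⟩
  | @tail b c _ hbc ih =>
    rcases ih with ⟨hb, hub⟩ | ⟨rfl, p, hp, hup, hpw⟩
    · by_cases hc : c = w
      · subst hc
        exact Or.inr ⟨rfl, b, hb, hub, hbc⟩
      · exact Or.inl ⟨hc, hub.tail (redEdge_erase hC hb hc hbc)⟩
    · refine Or.inl ⟨hbc.2.2.1.symm, ?_⟩
      by_cases hpc : p = c
      · exact hpc ▸ hup
      · exact hup.tail (redEdge_erase_through hC hW hpc hpw hbc)

theorem independentOn_erase {V : Type*} [DecidableEq V] {E : V → V → Prop}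
    {C : Finset V → Prop} (hC : isASC C) {W : Finset V} (h : independentOn E C W) (w : V) :
    independentOn E C (W.erase w) := by
  rcases h with rfl | ⟨hW, h⟩
  · exact Or.inl (Finset.erase_empty w)
  · refine Or.inr ⟨hC.2 _ _ hW (Finset.erase_subset w W), fun u hu v hv => ?_⟩
    rw [Finset.mem_erase] at hu hv
    rcases reach_erase hC hW hu.1 (h u hu.2 v hv.2) with hr | hr
    · exact hr.2
    · exact absurd hr.1 hv.1

/-- Let `G = (V,E)` be a strongly connected digraph and `C` an ASC on `V`. Then the
family `F_G^C` of all subsets of `V` independent on `(G, C)` is itself an abstract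
simplicial complex: `∅` is independent, and every subset of an independent set is
independent. -/
theorem stmt7 {V : Type*} [Fintype V] [DecidableEq V] (E : V → V → Prop)
    (hirr : ∀ x, ¬ E x x) (hsc : ∀ u v : V, Relation.ReflTransGen E u v)
    (C : Finset V → Prop) (hC : isASC C) :
    isASC (independentOn E C) := by
  refine ⟨Or.inl rfl, fun A B hA hBA => ?_⟩
  have key : ∀ S : Finset V, independentOn E C (A \ S) := by
    intro S
    induction S using Finset.induction_on with
    | empty => simpa using hA
    | insert a S _ ih =>
      rw [Finset.sdiff_insert]
      exact independentOn_erase hC ih a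
  rw [← Finset.sdiff_sdiff_eq_self hBA]
  exact key _
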